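/- Let n ≥ 3 be an integer and p > 1 with n = 2p/(p−1). Then there exist γ > 0 and c ≥ 2, and for these there exist R₀ > 1 and ε₀ ∈ (0,1), such that for every R ≥ R₀ and every ε ∈ (0, ε₀], the function ψ(r,t) = ((r−ε)(R−r))^{−2/(p−1)} · (1+r)^{2/(p−1)} · (1 + (R² / log(c r/ε))^{1/(p−1)}) · exp(γ(t+1)) satisfies ψ_rr + ((n−1)/r) ψ_r − ψ^p − ψ_t ≤ 0 for all r ∈ (ε, R) and all t > 0. -/

import Mathlib

/-- The supersolution `ψ_{R,ε}(r,t)` used in the borderline case `n = 2p/(p-1)`. -/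
noncomputable def psiSupLog (p γ c R ε r t : ℝ) : ℝ :=
  ((r - ε) * (R - r)) ^ (-2 / (p - 1)) * (1 + r) ^ (2 / (p - 1))
    * (1 + (R ^ 2 / Real.log (c * r / ε)) ^ (1 / (p - 1))) * Real.exp (γ * (t + 1))

/-!
Write `a = 1/(p-1)` and `ψ = φ(r) e^{γ(t+1)}`, and let `ρ = φ'/φ`. Dividing the parabolic expression
by `ψ` leaves `ρ' + ρ² + (n-1)ρ/r - ψ^{p-1} - γ`. For `n = 2p/(p-1)` the singular terms in
`1/(r-ε)²` and `1/(r(r-ε))` combine to `2a(2a+1) (1/(r-ε)) (1/(r-ε) - 1/r)`, which `log x ≤ x`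
bounds by a multiple of `1/((r-ε)² log(cr/ε))`. That quantity and `1/(R-r)²` are both dominated by
`φ^{p-1}`, hence by a small multiple of `ψ^{p-1}` once `γ` is large, and `-γ` absorbs the bounded
terms. If `n > 2p/(p-1)`, the excess `d` contributes `-2ad/(r(r-ε)) ≤ -2ad/r²`, and completing the
square with it controls the remaining cross terms in `1/r`.
-/

open Filter Real Set Topology

/-- `ℓ` is the logarithmic derivative of `f` at `x`. The relation is written `f' = f ℓ`, without
division, so that it composes with the calculus of `HasDerivAt`. -/
def HasLogDerivAt (f : ℝ → ℝ) (ℓ x : ℝ) : Prop :=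
  HasDerivAt f (f x * ℓ) x

namespace HasLogDerivAt

variable {f g : ℝ → ℝ} {ℓ m x : ℝ}

lemma mul (hf : HasLogDerivAt f ℓ x) (hg : HasLogDerivAt g m x) :
    HasLogDerivAt (fun s ↦ f s * g s) (ℓ + m) x :=
  (HasDerivAt.fun_mul hf hg).congr_deriv (by ring)

lemma mul_const (hf : HasLogDerivAt f ℓ x) (b : ℝ) : HasLogDerivAt (fun s ↦ f s * b) ℓ x :=
  (HasDerivAt.mul_const hf b).congr_deriv (by ring)

lemma const_div (hf : HasLogDerivAt f ℓ x) (hx : f x ≠ 0) (b : ℝ) :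
    HasLogDerivAt (fun s ↦ b / f s) (-ℓ) x :=
  ((hasDerivAt_const x b).fun_div hf hx).congr_deriv (by field_simp; simp)

lemma rpow_const (hf : HasLogDerivAt f ℓ x) (hx : f x ≠ 0) (q : ℝ) :
    HasLogDerivAt (fun s ↦ f s ^ q) (q * ℓ) x :=
  (HasDerivAt.rpow_const hf (Or.inl hx)).congr_deriv (by rw [rpow_sub_one hx]; field_simp)

lemma one_add (hf : HasLogDerivAt f ℓ x) (hx : 1 + f x ≠ 0) :
    HasLogDerivAt (fun s ↦ 1 + f s) (f x / (1 + f x) * ℓ) x :=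
  (HasDerivAt.const_add 1 hf).congr_deriv (by field_simp)

lemma div_one_add (hf : HasLogDerivAt f ℓ x) (hx : 1 + f x ≠ 0) :
    HasLogDerivAt (fun s ↦ f s / (1 + f s)) ((1 - f x / (1 + f x)) * ℓ) x :=
  (HasDerivAt.fun_div hf (HasDerivAt.const_add 1 hf) hx).congr_deriv (by field_simp)

lemma deriv_deriv {ρ : ℝ → ℝ} (hf : ∀ᶠ s in 𝓝 x, HasLogDerivAt f (ρ s) s)
    (hρ : DifferentiableAt ℝ ρ x) : deriv (deriv f) x = f x * (deriv ρ x + ρ x ^ 2) := by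
  have hderiv : deriv f =ᶠ[𝓝 x] fun s ↦ f s * ρ s := hf.mono fun s hs ↦ hs.deriv
  rw [hderiv.deriv_eq, (HasDerivAt.fun_mul hf.self_of_nhds hρ.hasDerivAt).deriv]
  ring

end HasLogDerivAt

lemma parabolic_operator_mul_exp {φ ρ : ℝ → ℝ} {r : ℝ} (hφ : 0 < φ r)
    (hφρ : ∀ᶠ s in 𝓝 r, HasLogDerivAt φ (ρ s) s) (hρ : DifferentiableAt ℝ ρ r) (k p γ t : ℝ) :
    deriv (deriv fun s ↦ φ s * exp (γ * (t + 1))) r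
        + k / r * deriv (fun s ↦ φ s * exp (γ * (t + 1))) r
        - (φ r * exp (γ * (t + 1))) ^ p - deriv (fun τ ↦ φ r * exp (γ * (τ + 1))) t
      = φ r * exp (γ * (t + 1))
        * (deriv ρ r + ρ r ^ 2 + k / r * ρ r
          - φ r ^ (p - 1) * exp (γ * (t + 1) * (p - 1)) - γ) := by
  have hψρ : ∀ᶠ s in 𝓝 r, HasLogDerivAt (fun s ↦ φ s * exp (γ * (t + 1))) (ρ s) s :=
    hφρ.mono fun s hs ↦ hs.mul_const _
  have hpow : (φ r * exp (γ * (t + 1))) ^ p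
      = φ r * exp (γ * (t + 1)) * (φ r ^ (p - 1) * exp (γ * (t + 1) * (p - 1))) := by
    rw [exp_mul _ (p - 1), ← mul_rpow hφ.le (exp_pos _).le, mul_comm (φ r * _),
      ← rpow_add_one (by positivity), sub_add_cancel]
  have htime : HasDerivAt (fun τ ↦ φ r * exp (γ * (τ + 1))) (φ r * exp (γ * (t + 1)) * γ) t :=
    (((((hasDerivAt_id' t).add_const 1).const_mul γ).exp).const_mul (φ r)).congr_deriv (by ring)
  rw [HasLogDerivAt.deriv_deriv hψρ hρ, hψρ.self_of_nhds.deriv, htime.deriv, hpow]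
  ring

lemma le_one_add_rpow_rpow_inv {a X : ℝ} (ha : 0 < a) (hX : 0 ≤ X) : X ≤ (1 + X ^ a) ^ a⁻¹ :=
  calc X = (X ^ a) ^ a⁻¹ := (rpow_rpow_inv hX ha.ne').symm
    _ ≤ (1 + X ^ a) ^ a⁻¹ := by gcongr; linarith

/-- The logarithmic correction to the radial profile, with `a = 1/(p-1)`. -/
noncomputable def logCorrection (a c R ε r : ℝ) : ℝ :=
  (R ^ 2 / log (c * r / ε)) ^ a

/-- The radial profile `φ_{R,ε}` of `psiSupLog`, with `a = 1/(p-1)`. -/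
noncomputable def phiSupLog (a c R ε r : ℝ) : ℝ :=
  ((r - ε) * (R - r)) ^ (-2 * a) * (1 + r) ^ (2 * a) * (1 + logCorrection a c R ε r)

/-- The ratio by which the logarithmic derivative of `1 + logCorrection` differs from that of
`logCorrection`. -/
noncomputable def logCorrectionWeight (a c R ε r : ℝ) : ℝ :=
  logCorrection a c R ε r / (1 + logCorrection a c R ε r)

/-- The logarithmic derivative of `phiSupLog` in `r`. -/
noncomputable def phiSupLogRate (a c R ε r : ℝ) : ℝ :=
  2 * a * ((R - r)⁻¹ + (1 + r)⁻¹ - (r - ε)⁻¹)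
    - a * (logCorrectionWeight a c R ε r * (r⁻¹ * (log (c * r / ε))⁻¹))

lemma psiSupLog_eq_phiSupLog_mul_exp (p γ c R ε r t : ℝ) :
    psiSupLog p γ c R ε r t = phiSupLog (1 / (p - 1)) c R ε r * exp (γ * (t + 1)) := by
  simp only [psiSupLog, phiSupLog, logCorrection, mul_one_div]

section Radial

variable {a c R ε r : ℝ}

lemma log_lt_log_mul_div (hc : 0 < c) (hε : 0 < ε) (hr : ε < r) : log c < log (c * r / ε) := by
  refine log_lt_log hc ?_
  rw [lt_div_iff₀ hε]
  gcongr

lemma log_mul_div_pos (hc : 1 < c) (hε : 0 < ε) (hr : ε < r) : 0 < log (c * r / ε) :=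
  (log_pos hc).trans (log_lt_log_mul_div (one_pos.trans hc) hε hr)

lemma div_le_mul_inv_log (hc : 1 < c) (hε : 0 < ε) (hr : ε < r) :
    ε / r ≤ c * (log (c * r / ε))⁻¹ := by
  have hr0 : 0 < r := hε.trans hr
  have hlog : log (c * r / ε) ≤ c * r / ε := log_le_self (by positivity)
  rw [← div_eq_mul_inv, div_le_div_iff₀ hr0 (log_mul_div_pos hc hε hr), mul_comm]
  rwa [le_div_iff₀ hε] at hlog

lemma inv_sub_mul_inv_sub_inv_le (hc : 1 < c) (hε : 0 < ε) (hr : ε < r) :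
    (r - ε)⁻¹ * ((r - ε)⁻¹ - r⁻¹) ≤ c * ((r - ε)⁻¹ ^ 2 * (log (c * r / ε))⁻¹) := by
  have hr0 : 0 < r := hε.trans hr
  have hx : 0 < r - ε := sub_pos.2 hr
  calc (r - ε)⁻¹ * ((r - ε)⁻¹ - r⁻¹) = (r - ε)⁻¹ ^ 2 * (ε / r) := by field_simp; ring
    _ ≤ (r - ε)⁻¹ ^ 2 * (c * (log (c * r / ε))⁻¹) := by
      gcongr
      exact div_le_mul_inv_log hc hε hr
    _ = c * ((r - ε)⁻¹ ^ 2 * (log (c * r / ε))⁻¹) := by ring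

lemma inner_singular_terms_le (ha : 0 ≤ a) (hc : 1 < c) (hε : 0 < ε) (hr : ε < r) :
    2 * a * (2 * a + 1) * ((r - ε)⁻¹ * ((r - ε)⁻¹ - r⁻¹))
        + a * ((a + 1) * (log (c * r / ε))⁻¹ + 4 * a) * ((r - ε)⁻¹ ^ 2 * (log (c * r / ε))⁻¹)
      ≤ a * (2 * (2 * a + 1) * c + (a + 1) * (log c)⁻¹ + 4 * a)
        * ((r - ε)⁻¹ ^ 2 * (log (c * r / ε))⁻¹) := by
  have hL := log_mul_div_pos hc hε hr
  have hl : (log (c * r / ε))⁻¹ ≤ (log c)⁻¹ :=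
    inv_anti₀ (log_pos hc) (log_lt_log_mul_div (one_pos.trans hc) hε hr).le
  calc 2 * a * (2 * a + 1) * ((r - ε)⁻¹ * ((r - ε)⁻¹ - r⁻¹))
        + a * ((a + 1) * (log (c * r / ε))⁻¹ + 4 * a) * ((r - ε)⁻¹ ^ 2 * (log (c * r / ε))⁻¹)
      ≤ 2 * a * (2 * a + 1) * (c * ((r - ε)⁻¹ ^ 2 * (log (c * r / ε))⁻¹))
        + a * ((a + 1) * (log c)⁻¹ + 4 * a) * ((r - ε)⁻¹ ^ 2 * (log (c * r / ε))⁻¹) := by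
        gcongr 2 * a * (2 * a + 1) * ?_ + a * ((a + 1) * ?_ + 4 * a) * _
        exact inv_sub_mul_inv_sub_inv_le hc hε hr
    _ = a * (2 * (2 * a + 1) * c + (a + 1) * (log c)⁻¹ + 4 * a)
        * ((r - ε)⁻¹ ^ 2 * (log (c * r / ε))⁻¹) := by ring

lemma logCorrection_pos (hc : 1 < c) (hε : 0 < ε) (hr : r ∈ Ioo ε R) :
    0 < logCorrection a c R ε r := by
  have hR : 0 < R := hε.trans (hr.1.trans hr.2)
  have hL := log_mul_div_pos hc hε hr.1
  unfold logCorrection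
  positivity

lemma phiSupLog_pos (hc : 1 < c) (hε : 0 < ε) (hr : r ∈ Ioo ε R) :
    0 < phiSupLog a c R ε r := by
  have hr0 : 0 < r := hε.trans hr.1
  have hx : 0 < r - ε := sub_pos.2 hr.1
  have hy : 0 < R - r := sub_pos.2 hr.2
  have hY := logCorrection_pos (a := a) hc hε hr
  unfold phiSupLog
  positivity

lemma logCorrectionWeight_mem_Icc (hc : 1 < c) (hε : 0 < ε) (hr : r ∈ Ioo ε R) :
    logCorrectionWeight a c R ε r ∈ Icc 0 1 := by
  have hY := logCorrection_pos (a := a) hc hε hr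
  exact ⟨by unfold logCorrectionWeight; positivity, div_le_one_of_le₀ (by linarith) (by linarith)⟩

lemma hasDerivAt_log_mul_div (hc : c ≠ 0) (hε : ε ≠ 0) (hr : r ≠ 0) :
    HasDerivAt (fun s ↦ log (c * s / ε)) r⁻¹ r :=
  ((((hasDerivAt_id' r).const_mul c).div_const ε).log (by positivity)).congr_deriv (by field_simp)

lemma hasLogDerivAt_logCorrection (hc : 1 < c) (hε : 0 < ε) (hr : r ∈ Ioo ε R) :
    HasLogDerivAt (logCorrection a c R ε) (-(a * (r⁻¹ * (log (c * r / ε))⁻¹))) r := by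
  have hR : 0 < R := hε.trans (hr.1.trans hr.2)
  have hr0 : 0 < r := hε.trans hr.1
  have hL := log_mul_div_pos hc hε hr.1
  have hlog : HasLogDerivAt (fun s ↦ log (c * s / ε)) (r⁻¹ * (log (c * r / ε))⁻¹) r :=
    (hasDerivAt_log_mul_div (by positivity) hε.ne' hr0.ne').congr_deriv
      (by rw [mul_comm, inv_mul_cancel_right₀ hL.ne'])
  rw [← mul_neg]
  exact (hlog.const_div hL.ne' (R ^ 2)).rpow_const (by positivity) a

lemma hasLogDerivAt_logCorrectionWeight (hc : 1 < c) (hε : 0 < ε) (hr : r ∈ Ioo ε R) :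
    HasLogDerivAt (logCorrectionWeight a c R ε)
      ((1 - logCorrectionWeight a c R ε r) * -(a * (r⁻¹ * (log (c * r / ε))⁻¹))) r :=
  (hasLogDerivAt_logCorrection hc hε hr).div_one_add
    (by linarith [logCorrection_pos (a := a) hc hε hr])

lemma hasLogDerivAt_phiSupLog (hc : 1 < c) (hε : 0 < ε) (hr : r ∈ Ioo ε R) :
    HasLogDerivAt (phiSupLog a c R ε) (phiSupLogRate a c R ε r) r := by
  have hr0 : 0 < r := hε.trans hr.1
  have hx : 0 < r - ε := sub_pos.2 hr.1
  have hy : 0 < R - r := sub_pos.2 hr.2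
  have hY := logCorrection_pos (a := a) hc hε hr
  have inner : HasLogDerivAt (fun s ↦ s - ε) (r - ε)⁻¹ r :=
    ((hasDerivAt_id' r).sub_const ε).congr_deriv (by field_simp)
  have outer : HasLogDerivAt (fun s ↦ R - s) (-(R - r)⁻¹) r :=
    ((hasDerivAt_id' r).const_sub R).congr_deriv (by field_simp)
  have shift : HasLogDerivAt (fun s ↦ 1 + s) (1 + r)⁻¹ r :=
    ((hasDerivAt_id' r).const_add 1).congr_deriv (by field_simp)
  have correction := (hasLogDerivAt_logCorrection (a := a) hc hε hr).one_add (by positivity)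
  have product := (((inner.mul outer).rpow_const (by positivity) (-2 * a)).mul
    (shift.rpow_const (by positivity) (2 * a))).mul correction
  refine HasDerivAt.congr_deriv product ?_
  simp only [phiSupLog, phiSupLogRate, logCorrectionWeight]
  ring

lemma hasDerivAt_phiSupLogRate (hc : 1 < c) (hε : 0 < ε) (hr : r ∈ Ioo ε R) :
    HasDerivAt (phiSupLogRate a c R ε)
      (2 * a * ((r - ε)⁻¹ ^ 2 + (R - r)⁻¹ ^ 2 - (1 + r)⁻¹ ^ 2)
        + a * logCorrectionWeight a c R ε r * r⁻¹ ^ 2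
          * ((log (c * r / ε))⁻¹
            + (1 + a * (1 - logCorrectionWeight a c R ε r)) * (log (c * r / ε))⁻¹ ^ 2)) r := by
  have hr0 : 0 < r := hε.trans hr.1
  have hx : 0 < r - ε := sub_pos.2 hr.1
  have hy : 0 < R - r := sub_pos.2 hr.2
  have hL := log_mul_div_pos hc hε hr.1
  have inner := ((hasDerivAt_id' r).sub_const ε).fun_inv hx.ne'
  have outer := ((hasDerivAt_id' r).const_sub R).fun_inv hy.ne'
  have shift := ((hasDerivAt_id' r).const_add 1).fun_inv (by positivity)
  have log_inv := (hasDerivAt_log_mul_div (by positivity) hε.ne' hr0.ne').fun_inv hL.ne'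
  refine ((((outer.fun_add shift).fun_sub inner).const_mul (2 * a)).fun_sub ((HasDerivAt.fun_mul
    (hasLogDerivAt_logCorrectionWeight hc hε hr)
    (((hasDerivAt_id' r).fun_inv hr0.ne').fun_mul log_inv)).const_mul a)).congr_deriv ?_
  simp only [div_eq_mul_inv, ← inv_pow]
  ring

lemma phiSupLog_rpow_inv (ha : 0 < a) (hc : 1 < c) (hε : 0 < ε) (hr : r ∈ Ioo ε R) :
    phiSupLog a c R ε r ^ a⁻¹
      = ((r - ε)⁻¹ * (R - r)⁻¹ * (1 + r)) ^ 2 * (1 + logCorrection a c R ε r) ^ a⁻¹ := by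
  have hr0 : 0 < r := hε.trans hr.1
  have hx : 0 < r - ε := sub_pos.2 hr.1
  have hy : 0 < R - r := sub_pos.2 hr.2
  have hY := logCorrection_pos (a := a) hc hε hr
  rw [phiSupLog, mul_rpow (by positivity) (by positivity), mul_rpow (by positivity) (by positivity),
    ← rpow_mul (by positivity), ← rpow_mul (by positivity), mul_inv_cancel_right₀ ha.ne',
    mul_inv_cancel_right₀ ha.ne', rpow_neg (by positivity), rpow_two, rpow_two]
  field_simp

lemma inv_sub_sq_le_phiSupLog_rpow (ha : 0 < a) (hc : 1 < c) (hε : 0 < ε) (hr : r ∈ Ioo ε R) :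
    (R - r)⁻¹ ^ 2 ≤ phiSupLog a c R ε r ^ a⁻¹ := by
  have hx : 0 < r - ε := sub_pos.2 hr.1
  have hy : 0 < R - r := sub_pos.2 hr.2
  have hinner : 1 ≤ (r - ε)⁻¹ * (1 + r) := by
    rw [inv_mul_eq_div, one_le_div hx]
    linarith
  have hcorr : 1 ≤ (1 + logCorrection a c R ε r) ^ a⁻¹ :=
    one_le_rpow (by linarith [logCorrection_pos (a := a) hc hε hr]) (by positivity)
  calc (R - r)⁻¹ ^ 2 = ((R - r)⁻¹ * 1) ^ 2 * 1 := by ring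
    _ ≤ ((R - r)⁻¹ * ((r - ε)⁻¹ * (1 + r))) ^ 2 * (1 + logCorrection a c R ε r) ^ a⁻¹ := by gcongr
    _ = phiSupLog a c R ε r ^ a⁻¹ := by rw [phiSupLog_rpow_inv ha hc hε hr]; ring

lemma inv_sub_sq_mul_inv_log_le_phiSupLog_rpow (ha : 0 < a) (hc : 1 < c) (hε : 0 < ε)
    (hr : r ∈ Ioo ε R) :
    (r - ε)⁻¹ ^ 2 * (log (c * r / ε))⁻¹ ≤ phiSupLog a c R ε r ^ a⁻¹ := by
  have hr0 : 0 < r := hε.trans hr.1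
  have hx : 0 < r - ε := sub_pos.2 hr.1
  have hy : 0 < R - r := sub_pos.2 hr.2
  have hL := log_mul_div_pos hc hε hr.1
  have houter : 1 ≤ (R - r)⁻¹ * R * (1 + r) := by
    rw [inv_mul_eq_div]
    exact one_le_mul_of_one_le_of_one_le ((one_le_div hy).2 (by linarith)) (by linarith)
  have hcorr : R ^ 2 / log (c * r / ε) ≤ (1 + logCorrection a c R ε r) ^ a⁻¹ :=
    le_one_add_rpow_rpow_inv ha (by positivity)
  calc (r - ε)⁻¹ ^ 2 * (log (c * r / ε))⁻¹
      = ((r - ε)⁻¹ * 1) ^ 2 * (log (c * r / ε))⁻¹ := by ring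
    _ ≤ ((r - ε)⁻¹ * ((R - r)⁻¹ * R * (1 + r))) ^ 2 * (log (c * r / ε))⁻¹ := by gcongr
    _ = ((r - ε)⁻¹ * (R - r)⁻¹ * (1 + r)) ^ 2 * (R ^ 2 / log (c * r / ε)) := by ring
    _ ≤ ((r - ε)⁻¹ * (R - r)⁻¹ * (1 + r)) ^ 2 * (1 + logCorrection a c R ε r) ^ a⁻¹ := by gcongr
    _ = phiSupLog a c R ε r ^ a⁻¹ := (phiSupLog_rpow_inv ha hc hε hr).symm

end Radial

section Riccati

-- `w, x, y, z, l` stand for `1/r, 1/(r-ε), 1/(R-r), 1/(1+r), 1/log(cr/ε)`, `θ` for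
-- `logCorrectionWeight`, and `k` for `n-1`. Up to the common factors `2a` and `a`, the first two
-- lemmas treat the part of `ρ' + ρ² + kρ/r` free of `θ` and the part proportional to `θ`.
variable {a k l w x y z θ : ℝ}

lemma riccati_power_le (ha : 0 ≤ a) (hk : 1 + 2 * a ≤ k) (hk2 : 2 ≤ k) (hw : 0 ≤ w)
    (hwx : w ≤ x) (hy : 0 ≤ y) (hz : 0 ≤ z) :
    x ^ 2 + y ^ 2 - z ^ 2 + 2 * a * (y + z - x) ^ 2 + k * w * (y + z - x)
      ≤ (2 * a + 1) * (x * (x - w)) + y ^ 2 + (k - 1) * (y + z) ^ 2 := by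
  obtain ⟨d, rfl⟩ : ∃ d, k = 1 + 2 * a + d := ⟨k - (1 + 2 * a), by ring⟩
  have hd : 0 ≤ d := by linarith
  -- Since `2 ≤ k`, the coefficient `k ≤ 2 * k - 2` is at most `4 * a + 2 * d`.
  have hcross : (1 + 2 * a + d) * (w * (y + z))
      ≤ 4 * a * (x * (y + z)) + 2 * d * (w * (y + z)) :=
    calc (1 + 2 * a + d) * (w * (y + z))
        ≤ (4 * a + 2 * d) * (w * (y + z)) := by gcongr ?_ * _; linarith
      _ = 4 * a * (w * (y + z)) + 2 * d * (w * (y + z)) := by ring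
      _ ≤ 4 * a * (x * (y + z)) + 2 * d * (w * (y + z)) := by gcongr
  have hsquare : d * (2 * (w * (y + z))) ≤ d * (w * x + (y + z) ^ 2) := by
    gcongr
    linarith [sq_nonneg (w - (y + z)), mul_le_mul_of_nonneg_left hwx hw]
  linarith [sq_nonneg z]

lemma riccati_log_le (ha : 0 ≤ a) (hk : 1 ≤ k) (hw : 0 ≤ w) (hwx : w ≤ x) (hy : 0 ≤ y)
    (hz : 0 ≤ z) (hl : 0 ≤ l) (hθ : θ ∈ Icc 0 1) :
    θ * ((a + 1) * (w ^ 2 * l ^ 2) + (1 - k) * (w ^ 2 * l) - 4 * a * (w * l * (y + z - x)))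
      ≤ ((a + 1) * l + 4 * a) * (x ^ 2 * l) := by
  have hx : 0 ≤ x := hw.trans hwx
  calc θ * ((a + 1) * (w ^ 2 * l ^ 2) + (1 - k) * (w ^ 2 * l) - 4 * a * (w * l * (y + z - x)))
      ≤ θ * ((a + 1) * (w ^ 2 * l ^ 2) + 4 * a * (w * x * l)) := by
        gcongr θ * ?_
        · exact hθ.1
        have h1 : 0 ≤ (k - 1) * (w ^ 2 * l) := mul_nonneg (sub_nonneg.2 hk) (by positivity)
        have h2 : 0 ≤ a * (w * l * (y + z)) := by positivity
        linarith
    _ ≤ 1 * ((a + 1) * (x ^ 2 * l ^ 2) + 4 * a * (x * x * l)) := by gcongr; exact hθ.2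
    _ = ((a + 1) * l + 4 * a) * (x ^ 2 * l) := by ring

lemma riccati_le (ha : 0 ≤ a) (hk : 1 + 2 * a ≤ k) (hk2 : 2 ≤ k) (hw : 0 ≤ w) (hwx : w ≤ x)
    (hy : 0 ≤ y) (hz : z ∈ Icc 0 1) (hl : 0 ≤ l) (hθ : θ ∈ Icc 0 1) :
    2 * a * (x ^ 2 + y ^ 2 - z ^ 2) + a * θ * w ^ 2 * (l + (1 + a * (1 - θ)) * l ^ 2)
        + (2 * a * (y + z - x) - a * (θ * (w * l))) ^ 2
        + k * w * (2 * a * (y + z - x) - a * (θ * (w * l)))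
      ≤ 2 * a * (2 * a + 1) * (x * (x - w)) + a * ((a + 1) * l + 4 * a) * (x ^ 2 * l)
        + 2 * a * (2 * k - 1) * y ^ 2 + 4 * a * (k - 1) := by
  have hpower := mul_le_mul_of_nonneg_left (riccati_power_le ha hk hk2 hw hwx hy hz.1)
    (by positivity : 0 ≤ 2 * a)
  have hlog := mul_le_mul_of_nonneg_left
    (riccati_log_le ha (one_le_two.trans hk2) hw hwx hy hz.1 hl hθ) ha
  have hyz : 2 * a * (k - 1) * (y + z) ^ 2 ≤ 2 * a * (k - 1) * (2 * (y ^ 2 + 1)) := by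
    have hk1 : 0 ≤ k - 1 := by linarith
    gcongr
    exact add_sq_le.trans (by gcongr; exact pow_le_one₀ hz.1 hz.2)
  linarith

end Riccati

/-- The constant in front of `φ^{p-1}` in the bound on `ρ' + ρ² + kρ/r`, where `ρ = φ'/φ` and
`a = 1/(p-1)`; its two summands are the coefficients of `1/((r-ε)² log(cr/ε))` and `1/(R-r)²`. -/
noncomputable def absorptionConstant (a c k : ℝ) : ℝ :=
  a * (2 * (2 * a + 1) * c + (a + 1) * (log c)⁻¹ + 4 * a) + 2 * a * (2 * k - 1)

lemma phiSupLogRate_riccati_le {a c k R ε r : ℝ} (ha : 0 < a) (hc : 1 < c) (hk : 1 + 2 * a ≤ k)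
    (hk2 : 2 ≤ k) (hε : 0 < ε) (hr : r ∈ Ioo ε R) :
    deriv (phiSupLogRate a c R ε) r + phiSupLogRate a c R ε r ^ 2
        + k / r * phiSupLogRate a c R ε r
      ≤ absorptionConstant a c k * phiSupLog a c R ε r ^ a⁻¹ + 4 * a * (k - 1) := by
  have hr0 : 0 < r := hε.trans hr.1
  have hx : 0 < r - ε := sub_pos.2 hr.1
  have hy : 0 < R - r := sub_pos.2 hr.2
  have hL := log_mul_div_pos hc hε hr.1
  have hlogc := log_pos hc
  have hk1 : 0 ≤ 2 * k - 1 := by linarith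
  have hz : (1 + r)⁻¹ ∈ Icc 0 1 := ⟨by positivity, inv_le_one_of_one_le₀ (by linarith)⟩
  have hwx : r⁻¹ ≤ (r - ε)⁻¹ := by gcongr; linarith
  rw [(hasDerivAt_phiSupLogRate hc hε hr).deriv, phiSupLogRate, div_eq_mul_inv k r,
    absorptionConstant, add_mul _ (2 * a * (2 * k - 1))]
  refine (riccati_le ha.le hk hk2 (by positivity) hwx (by positivity) hz (by positivity)
    (logCorrectionWeight_mem_Icc hc hε hr)).trans ?_
  gcongr ?_ + ?_ + _
  · refine (inner_singular_terms_le ha.le hc hε hr.1).trans ?_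
    gcongr
    exact inv_sub_sq_mul_inv_log_le_phiSupLog_rpow ha hc hε hr
  · gcongr
    exact inv_sub_sq_le_phiSupLog_rpow ha hc hε hr

theorem psiSupLog_is_supersolution_general {n p c : ℝ} (hn : 3 ≤ n) (hp : 1 < p)
    (hnp : 2 * p / (p - 1) ≤ n) (hc : 1 < c) :
    ∃ γ₀ > 0, ∀ γ ≥ γ₀, ∀ R, ∀ ε > 0, ∀ r ∈ Ioo ε R, ∀ t ≥ 0,
      deriv (deriv fun s ↦ psiSupLog p γ c R ε s t) r
        + (n - 1) / r * deriv (fun s ↦ psiSupLog p γ c R ε s t) r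
        - psiSupLog p γ c R ε r t ^ p
        - deriv (psiSupLog p γ c R ε r) t ≤ 0 := by
  obtain ⟨a, rfl⟩ : ∃ a, p = 1 + a⁻¹ := ⟨(p - 1)⁻¹, by simp⟩
  have ha : 0 < a := by simpa using hp
  have hk : 1 + 2 * a ≤ n - 1 := by
    have : 2 * (1 + a⁻¹) / (1 + a⁻¹ - 1) = 2 + 2 * a := by field_simp; ring
    linarith
  have hB : 0 < 4 * a * (n - 1 - 1) := mul_pos (by positivity) (by linarith)
  refine ⟨max (4 * a * (n - 1 - 1)) (a * absorptionConstant a c (n - 1)),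
    lt_max_of_lt_left hB, fun γ hγ R ε hε r hr t ht ↦ ?_⟩
  obtain ⟨hBγ, hKγ⟩ := max_le_iff.1 hγ
  have hγ0 : 0 ≤ γ := hB.le.trans hBγ
  have hrate : ∀ᶠ s in 𝓝 r, HasLogDerivAt (phiSupLog a c R ε) (phiSupLogRate a c R ε s) s :=
    eventually_of_mem (Ioo_mem_nhds hr.1 hr.2) fun s hs ↦ hasLogDerivAt_phiSupLog hc hε hs
  have hφ := phiSupLog_pos (a := a) hc hε hr
  have hψ : psiSupLog (1 + a⁻¹) γ c R ε = fun r t ↦ phiSupLog a c R ε r * exp (γ * (t + 1)) := by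
    ext r t
    simp [psiSupLog_eq_phiSupLog_mul_exp]
  simp only [hψ]
  rw [parabolic_operator_mul_exp hφ hrate
    (hasDerivAt_phiSupLogRate hc hε hr).differentiableAt, add_sub_cancel_left]
  refine mul_nonpos_of_nonneg_of_nonpos (by positivity) ?_
  have hK : absorptionConstant a c (n - 1) ≤ exp (γ * (t + 1) * a⁻¹) :=
    calc absorptionConstant a c (n - 1) = a * absorptionConstant a c (n - 1) * 1 * a⁻¹ := by
          field_simp
      _ ≤ γ * (t + 1) * a⁻¹ := by gcongr; linarith
      _ ≤ exp (γ * (t + 1) * a⁻¹) := by linarith [add_one_le_exp (γ * (t + 1) * a⁻¹)]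
  have hriccati := phiSupLogRate_riccati_le ha hc hk (by linarith) hε hr
  have habsorb := mul_le_mul_of_nonneg_right hK (rpow_nonneg hφ.le a⁻¹)
  linarith

/-- for `n = 2p/(p-1)` there are `γ > 0`, `c ≥ 2`, and thresholds
`R₀ > 1`, `ε₀ ∈ (0,1)` such that the logarithmically corrected `ψ_{R,ε}` is a
supersolution for all `R ≥ R₀`, `ε ∈ (0,ε₀]`. -/
theorem psiSupLog_is_supersolution
    (n : ℕ) (hn : 3 ≤ n) (p : ℝ) (hp : 1 < p) (hnp : (n : ℝ) = 2 * p / (p - 1)) :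
    ∃ γ > (0:ℝ), ∃ c ≥ (2:ℝ), ∃ R₀ > (1:ℝ), ∃ ε₀ ∈ Set.Ioo (0:ℝ) 1,
      ∀ R ≥ R₀, ∀ ε ∈ Set.Ioc (0:ℝ) ε₀, ∀ r ∈ Set.Ioo ε R, ∀ t : ℝ, 0 < t →
        deriv (deriv fun s => psiSupLog p γ c R ε s t) r
          + (((n : ℝ) - 1) / r) * deriv (fun s => psiSupLog p γ c R ε s t) r
          - psiSupLog p γ c R ε r t ^ p
          - deriv (psiSupLog p γ c R ε r) t ≤ 0 := by
  obtain ⟨γ, hγ, h⟩ := psiSupLog_is_supersolution_general (c := 2) (n := n)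
    (by exact_mod_cast hn) hp hnp.ge one_lt_two
  exact ⟨γ, hγ, 2, le_rfl, 2, one_lt_two, 1 / 2, by norm_num,
    fun R _ ε hε r hr t ht ↦ h γ le_rfl R ε hε.1 r hr t ht.le⟩
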